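/- For all b, b' with 0 < b' < b ≤ π/2 and every α ∈ ℝ, the bound-state energies satisfy ε(α,b) < ε(α,b'); i.e. the eigenvalue is strictly monotonous across the halflayer: ε(α,b) < ε(α,b') whenever |b − π/2| < |b' − π/2|. -/

import Mathlib

open Real Filter Topology Asymptotics

/-- The digamma function `ψ = Γ'/Γ`. -/
noncomputable def digamma (x : ℝ) : ℝ := deriv Real.Gamma x / Real.Gamma x

/-- The regularized Green's function `ξ(b,z)` of a point interaction at height
`b ∈ (0,π)` in the Dirichlet layer `ℝ²×(0,π)`, for energies `z < 1`:
`ξ(b,z) = −(1/π²) Σ_{n≥1} ln√(1 − z/n²)·sin²(n b)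
          + (1/(4π²))·[γ + ψ(b/π) + (π/2)·cot b]`. -/
noncomputable def xiLayer (b z : ℝ) : ℝ :=
  -(1 / π ^ 2) *
      ∑' n : ℕ, Real.log (Real.sqrt (1 - z / ((n : ℝ) + 1) ^ 2)) * Real.sin (((n : ℝ) + 1) * b) ^ 2
    + (1 / (4 * π ^ 2)) *
      (Real.eulerMascheroniConstant + digamma (b / π) + (π / 2) * Real.cot b)

/-! By the reflection formula and `2 * sin ^ 2 t = 1 - cos (2 * t)`, the `b`-dependent part of
`4 * π ^ 2 * ξ(b, z)` is `S_x(z) + (ψ(x) + ψ(1 - x)) / 2`, where `x = b / π` and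
`S_x(z) = ∑ log (1 - z / n ^ 2) * cos (2 * π * n * x)`. For `z ≤ 0` write `z = -(L / (2 * π)) ^ 2`.
The Fourier series of `cosh (l * (1 / 2 - x))` on the circle sums the `l`-derivative of `S_x`, and
Gauss's integral represents digamma differences by the very same kernel: for two heights `x`, `y`
the difference of the `b`-dependent parts is
`∫ l in Ioi L, (cosh (l * (1 / 2 - y)) - cosh (l * (1 / 2 - x))) / (2 * sinh (l / 2))`,
which is positive when `x` is closer to `1 / 2` than `y`. For `0 ≤ z < 1` the hyperbolic functions
become trigonometric, and `S_x - S_y` increases from its value at `z = 0`. So `ξ(b, z)` increases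
towards the middle of the layer, and since it increases in `z`, its level sets move down in energy.
-/

section FourierSeries

variable {w : ℂ}

lemma add_two_pi_I_mul_int_ne_zero (hw : Complex.sinh (w / 2) ≠ 0) (n : ℤ) :
    w + 2 * π * Complex.I * n ≠ 0 := by
  contrapose! hw
  rw [show w / 2 = -(n * π * Complex.I) by linear_combination hw / 2, Complex.sinh_neg,
    Complex.sinh_mul_I, Complex.sin_int_mul_pi, zero_mul, neg_zero]

lemma sq_add_two_pi_mul_int_sq_ne_zero (hw : Complex.sinh (w / 2) ≠ 0) (n : ℤ) :
    w ^ 2 + (2 * π * n) ^ 2 ≠ 0 := by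
  have factor : w ^ 2 + (2 * π * n) ^ 2
      = (w + 2 * π * Complex.I * n) * (w + 2 * π * Complex.I * (-n : ℤ)) := by
    push_cast
    linear_combination (2 * π * n : ℂ) ^ 2 * Complex.I_sq
  rw [factor]
  exact mul_ne_zero (add_two_pi_I_mul_int_ne_zero hw n) (add_two_pi_I_mul_int_ne_zero hw (-n))

lemma integral_exp_mul_exp_half_sub {n : ℤ} (hn : w + 2 * π * Complex.I * n ≠ 0) :
    ∫ t in (0 : ℝ)..1, Complex.exp (-(2 * π * Complex.I * n * t)) * Complex.exp (w * (1 / 2 - t))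
      = 2 * Complex.sinh (w / 2) / (w + 2 * π * Complex.I * n) := by
  have integrand (t : ℝ) :
      Complex.exp (-(2 * π * Complex.I * n * t)) * Complex.exp (w * (1 / 2 - t))
        = Complex.exp (w / 2) * Complex.exp (-(w + 2 * π * Complex.I * n) * t) := by
    rw [← Complex.exp_add, ← Complex.exp_add]
    ring_nf
  have endpoint : Complex.exp (-(w + 2 * π * Complex.I * n)) = Complex.exp (-w) := by
    exact Complex.exp_eq_exp_iff_exists_int.mpr ⟨-n, by push_cast; ring⟩
  have cancel : Complex.exp (w / 2) * Complex.exp (-w) = Complex.exp (-(w / 2)) := by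
    rw [← Complex.exp_add]
    ring_nf
  simp_rw [integrand]
  rw [intervalIntegral.integral_const_mul, integral_exp_mul_complex (neg_ne_zero.mpr hn)]
  simp only [Complex.ofReal_one, mul_one, Complex.ofReal_zero, mul_zero, Complex.exp_zero]
  rw [endpoint, Complex.two_sinh, ← cancel]
  field_simp
  ring

lemma fourierCoeffOn_cosh (hw : Complex.sinh (w / 2) ≠ 0) (n : ℤ) :
    fourierCoeffOn zero_lt_one (fun t : ℝ => Complex.cosh (w * (1 / 2 - t))) n
      = 2 * w * Complex.sinh (w / 2) * (w ^ 2 + (2 * π * n) ^ 2)⁻¹ := by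
  have hpos := add_two_pi_I_mul_int_ne_zero hw n
  have hneg : -w + 2 * π * Complex.I * n ≠ 0 :=
    add_two_pi_I_mul_int_ne_zero (by rwa [neg_div, Complex.sinh_neg, neg_ne_zero]) n
  have integrand (t : ℝ) :
      fourier (-n) (t : AddCircle ((1 : ℝ) - 0)) • Complex.cosh (w * (1 / 2 - t))
        = (Complex.exp (-(2 * π * Complex.I * n * t)) * Complex.exp (w * (1 / 2 - t))
          + Complex.exp (-(2 * π * Complex.I * n * t)) * Complex.exp (-w * (1 / 2 - t))) / 2 := by
    rw [fourier_coe_apply, Complex.cosh, smul_eq_mul]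
    push_cast
    ring_nf
  rw [fourierCoeffOn_eq_integral]
  simp_rw [integrand]
  rw [intervalIntegral.integral_div, intervalIntegral.integral_add
    (Continuous.intervalIntegrable (by fun_prop) _ _)
    (Continuous.intervalIntegrable (by fun_prop) _ _),
    integral_exp_mul_exp_half_sub hpos, integral_exp_mul_exp_half_sub hneg, neg_div,
    Complex.sinh_neg, sub_zero, div_one, one_smul, div_add_div _ _ hpos hneg, ← div_eq_mul_inv,
    div_div, div_eq_div_iff (mul_ne_zero (mul_ne_zero hpos hneg) two_ne_zero)
      (sq_add_two_pi_mul_int_sq_ne_zero hw n)]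
  linear_combination
    (-4 * w * Complex.sinh (w / 2) * (2 * π * n : ℂ) ^ 2) * Complex.I_sq

lemma summable_inv_sq_add_two_pi_mul_int_sq (w : ℂ) :
    Summable fun n : ℤ => (w ^ 2 + (2 * π * n) ^ 2)⁻¹ := by
  have h := (EisensteinSeries.summable_linear_sub_mul_linear_add
    (w * Complex.I / (2 * π)) 1 1).mul_left (-((2 * π : ℂ) ^ 2)⁻¹)
  refine h.congr fun n => ?_
  rw [neg_mul, ← mul_inv, ← inv_neg]
  congr 1
  push_cast
  field_simp
  linear_combination -w ^ 2 * Complex.I_sq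

lemma hasSum_exp_div_sq_add_sq (hw : Complex.sinh (w / 2) ≠ 0) {x : ℝ} (hx : x ∈ Set.Ico 0 1) :
    HasSum (fun n : ℤ => Complex.exp (2 * π * Complex.I * n * x) / (w ^ 2 + (2 * π * n) ^ 2))
      (Complex.cosh (w * (1 / 2 - x)) / (2 * w * Complex.sinh (w / 2))) := by
  have hw₀ : w ≠ 0 := by rintro rfl; simp at hw
  let f : ℝ → ℂ := fun t => Complex.cosh (w * (1 / 2 - t))
  have periodic : f 0 = f 1 := by
    simp only [f]
    rw [← Complex.cosh_neg]
    push_cast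
    ring_nf
  let F : C(UnitAddCircle, ℂ) := ⟨AddCircle.liftIco 1 0 f,
    AddCircle.liftIco_zero_continuous periodic (by fun_prop)⟩
  have coeff (n : ℤ) : fourierCoeff F n
      = 2 * w * Complex.sinh (w / 2) * (w ^ 2 + (2 * π * n) ^ 2)⁻¹ := by
    change fourierCoeff (AddCircle.liftIco 1 0 f) n = _
    simpa only [zero_add] using (fourierCoeff_liftIco_eq f n).trans
      (by simpa only [zero_add] using fourierCoeffOn_cosh hw n)
  have hsum : Summable (fourierCoeff F) := by
    simpa only [funext coeff] using (summable_inv_sq_add_two_pi_mul_int_sq w).mul_left _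
  have pointwise := (has_pointwise_sum_fourier_series_of_summable hsum x).div_const
    (2 * w * Complex.sinh (w / 2))
  have value : F x = f x := AddCircle.liftIco_zero_coe_apply (f := f) hx
  convert! pointwise using 1
  · funext n
    rw [coeff, fourier_coe_apply, smul_eq_mul, Complex.ofReal_one, div_one]
    field_simp
  · rw [value]

lemma hasSum_cos_div_sq_add_complex_sq (hw : Complex.sinh (w / 2) ≠ 0) {x : ℝ}
    (hx : x ∈ Set.Ico 0 1) :
    HasSum (fun n : ℕ => Complex.cos (2 * π * (n + 1) * x) / ((n + 1) ^ 2 + (w / (2 * π)) ^ 2))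
      (π ^ 2 * Complex.cosh (w * (1 / 2 - x)) / (w * Complex.sinh (w / 2))
        - 2 * π ^ 2 / w ^ 2) := by
  have hw₀ : w ≠ 0 := by rintro rfl; simp at hw
  have folded := (hasSum_nat_add_iff' 1).mpr (hasSum_exp_div_sq_add_sq hw hx).nat_add_neg
  convert! folded.mul_left (2 * π ^ 2 : ℂ) using 1
  · funext n
    have hden := sq_add_two_pi_mul_int_sq_ne_zero hw (n + 1)
    rw [Complex.cos]
    push_cast at hden ⊢
    have hden' : ((n : ℂ) + 1) ^ 2 + (w / (2 * π)) ^ 2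
        = (w ^ 2 + (2 * π * (n + 1)) ^ 2) / (2 * π) ^ 2 := by
      field_simp
      ring
    rw [hden', mul_neg (2 * π : ℂ), neg_sq]
    field_simp
  · simp only [Finset.range_one, Finset.sum_singleton, Nat.cast_zero, Int.cast_zero, mul_zero,
      zero_mul, neg_zero, Complex.exp_zero]
    field_simp
    ring

lemma hasSum_cos_div_sq_add_sq {l x : ℝ} (hl : l ≠ 0) (hx : x ∈ Set.Ico 0 1) :
    HasSum (fun n : ℕ => cos (2 * π * (n + 1) * x) / ((n + 1) ^ 2 + (l / (2 * π)) ^ 2))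
      (π ^ 2 * cosh (l * (1 / 2 - x)) / (l * sinh (l / 2)) - 2 * π ^ 2 / l ^ 2) := by
  have hsinh : Complex.sinh ((l : ℂ) / 2) ≠ 0 := by
    exact_mod_cast sinh_ne_zero.mpr (div_ne_zero hl two_ne_zero)
  rw [← Complex.hasSum_ofReal]
  convert! hasSum_cos_div_sq_add_complex_sq hsinh hx using 1
  · funext n
    push_cast
    rfl
  · push_cast
    rfl

lemma hasSum_cos_div_sq_sub_sq {l x : ℝ} (hl : sin (l / 2) ≠ 0) (hx : x ∈ Set.Ico 0 1) :
    HasSum (fun n : ℕ => cos (2 * π * (n + 1) * x) / ((n + 1) ^ 2 - (l / (2 * π)) ^ 2))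
      (2 * π ^ 2 / l ^ 2 - π ^ 2 * cos (l * (1 / 2 - x)) / (l * sin (l / 2))) := by
  have hsinh : Complex.sinh (l * Complex.I / 2) = sin (l / 2) * Complex.I := by
    rw [mul_div_right_comm, Complex.sinh_mul_I]
    push_cast
    rfl
  have hcosh : Complex.cosh (l * Complex.I * (1 / 2 - x)) = cos (l * (1 / 2 - x)) := by
    rw [mul_right_comm, Complex.cosh_mul_I]
    push_cast
    rfl
  have h := hasSum_cos_div_sq_add_complex_sq (w := l * Complex.I)
    (by rw [hsinh]; exact mul_ne_zero (by exact_mod_cast hl) Complex.I_ne_zero) hx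
  rw [hsinh, hcosh] at h
  rw [← Complex.hasSum_ofReal]
  convert! h using 1
  · funext n
    push_cast
    rw [mul_div_right_comm, mul_pow, Complex.I_sq]
    ring
  · push_cast
    rw [mul_mul_mul_comm, Complex.I_mul_I, mul_pow, Complex.I_sq]
    ring

end FourierSeries

section Digamma

open MeasureTheory Set

variable {x y : ℝ}

lemma hasDerivAt_log_Gamma (hx : 0 < x) : HasDerivAt (log ∘ Gamma) (digamma x) x :=
  (differentiableAt_Gamma fun m => (neg_nonpos.mpr m.cast_nonneg |>.trans_lt hx).ne').hasDerivAt.log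
    (Gamma_pos_of_pos hx).ne'

lemma log_Gamma_add_one (hx : 0 < x) : log (Gamma (x + 1)) = log (Gamma x) + log x := by
  rw [Gamma_add_one hx.ne', log_mul hx.ne' (Gamma_pos_of_pos hx).ne', add_comm]

lemma digamma_add_one (hx : 0 < x) : digamma (x + 1) = digamma x + 1 / x := by
  have shifted := (hasDerivAt_log_Gamma (add_pos hx one_pos)).comp_add_const x 1
  have split := (hasDerivAt_log_Gamma hx).add (hasDerivAt_log hx.ne')
  rw [one_div]
  refine shifted.unique (split.congr_of_eventuallyEq ?_)
  filter_upwards [eventually_gt_nhds hx] with t ht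
  exact log_Gamma_add_one ht

lemma digamma_add_nat (hx : 0 < x) (M : ℕ) :
    digamma (x + M) = digamma x + ∑ m ∈ Finset.range M, 1 / (x + m) := by
  induction M with
  | zero => simp
  | succ M ih =>
    rw [Finset.sum_range_succ, ← add_assoc, ← ih, Nat.cast_succ, ← add_assoc,
      digamma_add_one (by positivity)]

lemma digamma_one_sub (hx : x ∈ Ioo 0 1) : digamma (1 - x) = digamma x + π * cot (π * x) := by
  have sin_pi_mul_pos {t : ℝ} (ht : t ∈ Ioo 0 1) : 0 < sin (π * t) :=
    sin_pos_of_pos_of_lt_pi (mul_pos pi_pos ht.1) (mul_lt_of_lt_one_right pi_pos ht.2)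
  have gamma_side := (hasDerivAt_log_Gamma hx.1).add
    ((hasDerivAt_log_Gamma (sub_pos.mpr hx.2)).comp_const_sub 1 x)
  have sine_side : HasDerivAt (fun t => log π - log (sin (π * t)))
      (-(cos (π * x) * π / sin (π * x))) x :=
    (((hasDerivAt_const_mul π).sin).log (sin_pi_mul_pos hx).ne').const_sub _
  have reflection : (log ∘ Gamma + fun t => (log ∘ Gamma) (1 - t))
      =ᶠ[𝓝 x] fun t => log π - log (sin (π * t)) := by
    filter_upwards [Ioo_mem_nhds hx.1 hx.2] with t ht
    simp only [Function.comp_apply, Pi.add_apply]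
    rw [← log_mul (Gamma_pos_of_pos ht.1).ne' (Gamma_pos_of_pos (sub_pos.mpr ht.2)).ne',
      Gamma_mul_Gamma_one_sub, log_div pi_ne_zero (sin_pi_mul_pos ht).ne']
  have deriv_eq := gamma_side.unique (sine_side.congr_of_eventuallyEq reflection)
  rw [cot_eq_cos_div_sin]
  linear_combination -deriv_eq

lemma digamma_le_log (hx : 0 < x) : digamma x ≤ log x := by
  have h := convexOn_log_Gamma.le_slope_of_hasDerivAt (mem_Ioi.mpr hx)
    (mem_Ioi.mpr (add_pos hx one_pos)) (lt_add_one x) (hasDerivAt_log_Gamma hx)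
  simpa [slope_def_field, log_Gamma_add_one hx] using h

lemma log_le_digamma_add_one (hx : 0 < x) : log x ≤ digamma (x + 1) := by
  have h := convexOn_log_Gamma.slope_le_of_hasDerivAt (mem_Ioi.mpr hx)
    (mem_Ioi.mpr (add_pos hx one_pos)) (lt_add_one x)
    (hasDerivAt_log_Gamma (add_pos hx one_pos))
  simpa [slope_def_field, log_Gamma_add_one hx] using h

lemma tendsto_digamma_sub_log : Tendsto (fun x => digamma x - log x) atTop (𝓝 0) := by
  refine tendsto_of_tendsto_of_tendsto_of_le_of_le'
    (by simpa using (tendsto_inv_atTop_zero (𝕜 := ℝ)).neg) tendsto_const_nhds ?_ ?_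
  · filter_upwards [eventually_gt_atTop 0] with x hx
    have := log_le_digamma_add_one hx
    rw [digamma_add_one hx, one_div] at this
    linarith
  · filter_upwards [eventually_gt_atTop 0] with x hx
    exact sub_nonpos.mpr (digamma_le_log hx)

lemma tendsto_digamma_add_sub_digamma_add (x y : ℝ) :
    Tendsto (fun t => digamma (x + t) - digamma (y + t)) atTop (𝓝 0) := by
  have approx (c : ℝ) : Tendsto (fun t => digamma (c + t) - log t) atTop (𝓝 0) := by
    have h := (tendsto_digamma_sub_log.comp (tendsto_atTop_add_const_right _ c tendsto_id)).add
      (tendsto_log_comp_add_sub_log c)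
    simpa [add_comm] using h
  simpa using (approx x).sub (approx y)

lemma hasSum_digamma_sub (hx : 0 < x) (hy : 0 < y) :
    HasSum (fun m : ℕ => 1 / (y + m) - 1 / (x + m)) (digamma x - digamma y) := by
  wlog hyx : y ≤ x generalizing x y
  · simpa using (this hy hx (le_of_not_ge hyx)).neg
  have nonneg (m : ℕ) : 0 ≤ 1 / (y + m) - 1 / (x + m) :=
    sub_nonneg.mpr (one_div_le_one_div_of_le (by positivity) (by gcongr))
  rw [hasSum_iff_tendsto_nat_of_nonneg nonneg]
  have remainder : Tendsto (fun M : ℕ => digamma (x + M) - digamma (y + M)) atTop (𝓝 0) :=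
    (tendsto_digamma_add_sub_digamma_add x y).comp tendsto_natCast_atTop_atTop
  refine (sub_zero (digamma x - digamma y) ▸ remainder.const_sub _).congr fun M => ?_
  rw [digamma_add_nat hx, digamma_add_nat hy, Finset.sum_sub_distrib]
  ring

lemma strictMonoOn_digamma : StrictMonoOn digamma (Ioi 0) := by
  intro y hy x hx hyx
  have h := hasSum_digamma_sub hx hy
  have pos (m : ℕ) : 0 < 1 / (y + m) - 1 / (x + m) := by
    have : 0 < y + m := add_pos_of_pos_of_nonneg hy m.cast_nonneg
    exact sub_pos.mpr (one_div_lt_one_div_of_lt this (by gcongr))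
  rw [← sub_pos, ← h.tsum_eq]
  exact h.summable.tsum_pos (fun m => (pos m).le) 0 (pos 0)

lemma hasSum_exp_neg_add_nat_mul {l : ℝ} (hl : 0 < l) (x : ℝ) :
    HasSum (fun m : ℕ => exp (-(x + m) * l)) (exp (-x * l) / (1 - exp (-l))) := by
  have h := (hasSum_geometric_of_lt_one (exp_pos (-l)).le
    (exp_lt_one_iff.mpr (neg_neg_iff_pos.mpr hl))).mul_left (exp (-x * l))
  refine h.congr_fun fun m => ?_
  rw [← exp_nat_mul, ← exp_add]
  ring_nf

lemma integrableOn_exp_neg_mul_Ioi (hx : 0 < x) : IntegrableOn (fun l => exp (-x * l)) (Ioi 0) :=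
  integrableOn_exp_mul_Ioi (neg_neg_iff_pos.mpr hx) 0

lemma integral_exp_neg_mul_Ioi (hx : 0 < x) : ∫ l in Ioi 0, exp (-x * l) = 1 / x := by
  rw [integral_exp_mul_Ioi (neg_neg_iff_pos.mpr hx), mul_zero, exp_zero, neg_div_neg_eq]

lemma digamma_sub_digamma_eq_integral (hx : 0 < x) (hy : 0 < y) :
    digamma x - digamma y = ∫ l in Ioi 0, (exp (-y * l) - exp (-x * l)) / (1 - exp (-l)) := by
  wlog hyx : y ≤ x generalizing x y
  · rw [← neg_sub, this hy hx (le_of_not_ge hyx), ← integral_neg]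
    simp_rw [← neg_div, neg_sub]
  let F (m : ℕ) (l : ℝ) : ℝ := exp (-(y + m) * l) - exp (-(x + m) * l)
  have integrable (m : ℕ) : IntegrableOn (F m) (Ioi 0) :=
    (integrableOn_exp_neg_mul_Ioi (by positivity)).sub
      (integrableOn_exp_neg_mul_Ioi (by positivity))
  have integral_F (m : ℕ) : ∫ l in Ioi 0, F m l = 1 / (y + m) - 1 / (x + m) := by
    rw [integral_sub (integrableOn_exp_neg_mul_Ioi (by positivity))
      (integrableOn_exp_neg_mul_Ioi (by positivity)), integral_exp_neg_mul_Ioi (by positivity),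
      integral_exp_neg_mul_Ioi (by positivity)]
  have norm_F (m : ℕ) : ∫ l in Ioi 0, ‖F m l‖ = ∫ l in Ioi 0, F m l := by
    refine setIntegral_congr_fun measurableSet_Ioi fun l (hl : 0 < l) => norm_of_nonneg ?_
    exact sub_nonneg.mpr (exp_le_exp.mpr (by gcongr))
  have swapped := hasSum_integral_of_summable_integral_norm integrable
    (by simpa only [norm_F, integral_F] using (hasSum_digamma_sub hx hy).summable)
  simp_rw [integral_F] at swapped
  rw [(hasSum_digamma_sub hx hy).unique swapped]
  refine setIntegral_congr_fun measurableSet_Ioi fun l (hl : 0 < l) => ?_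
  rw [sub_div]
  exact ((hasSum_exp_neg_add_nat_mul hl y).sub (hasSum_exp_neg_add_nat_mul hl x)).tsum_eq

lemma integrableOn_digamma_sub_digamma (hx : 0 < x) (hy : 0 < y) :
    IntegrableOn (fun l => (exp (-y * l) - exp (-x * l)) / (1 - exp (-l))) (Ioi 0) := by
  obtain rfl | hxy := eq_or_ne x y
  · simp
  · refine Integrable.of_integral_ne_zero ?_
    rw [← digamma_sub_digamma_eq_integral hx hy, sub_ne_zero]
    exact strictMonoOn_digamma.injOn.ne hx hy hxy

end Digamma

section LogCosSeries

open Set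

variable {x z l : ℝ}

lemma one_le_natCast_add_one_sq (n : ℕ) : (1 : ℝ) ≤ ((n : ℝ) + 1) ^ 2 :=
  one_le_pow₀ (le_add_of_nonneg_left n.cast_nonneg)

lemma one_sub_div_natCast_add_one_sq_pos (hz : z < 1) (n : ℕ) : 0 < 1 - z / ((n : ℝ) + 1) ^ 2 := by
  rw [sub_pos, div_lt_one (by positivity)]
  exact hz.trans_le (one_le_natCast_add_one_sq n)

lemma summable_inv_natCast_add_one_sq : Summable fun n : ℕ => (((n : ℝ) + 1) ^ 2)⁻¹ := by
  have h := (summable_nat_add_iff 1).mpr (summable_nat_pow_inv.mpr one_lt_two)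
  exact_mod_cast h

lemma summable_log_one_sub_mul {a : ℕ → ℝ} {C : ℝ} (ha : ∀ n, |a n| ≤ C) (z : ℝ) :
    Summable fun n : ℕ => log (1 - z / ((n : ℝ) + 1) ^ 2) * a n := by
  have logs : Summable fun n : ℕ => log (1 - z / ((n : ℝ) + 1) ^ 2) := by
    simpa only [neg_mul, ← div_eq_mul_inv, ← sub_eq_add_neg, neg_div] using
      summable_log_one_add_of_summable (summable_inv_natCast_add_one_sq.mul_left (-z))
  refine .of_norm_bounded (logs.abs.mul_right C) fun n => ?_
  rw [norm_mul]
  exact mul_le_mul_of_nonneg_left (ha n) (norm_nonneg _)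

lemma hasDerivAt_log_one_sub_div {c : ℝ} (hc : c ≠ 0) (hz : c - z ≠ 0) :
    HasDerivAt (fun z => log (1 - z / c)) (-(1 / (c - z))) z := by
  have inner : 1 - z / c = (c - z) / c := by field_simp
  have h := (((hasDerivAt_id z).div_const c).const_sub 1).log
    (by rw [id, inner]; exact div_ne_zero hz hc)
  convert! h using 1
  rw [id, inner]
  field_simp

lemma hasDerivAt_tsum_log_one_sub_mul {a : ℕ → ℝ} {C : ℝ} (ha : ∀ n, |a n| ≤ C) (hz : z < 1) :
    HasDerivAt (fun z => ∑' n : ℕ, log (1 - z / ((n : ℝ) + 1) ^ 2) * a n)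
      (-∑' n : ℕ, a n / (((n : ℝ) + 1) ^ 2 - z)) z := by
  obtain ⟨r, hzr, hr⟩ := exists_between (max_lt hz one_pos)
  obtain ⟨hzr, hr₀⟩ := max_lt_iff.mp hzr
  have hC : 0 ≤ C := (abs_nonneg _).trans (ha 0)
  rw [← tsum_neg]
  refine hasDerivAt_tsum_of_isPreconnected
    (g := fun (n : ℕ) z => log (1 - z / ((n : ℝ) + 1) ^ 2) * a n)
    (g' := fun n z => -(a n / (((n : ℝ) + 1) ^ 2 - z)))
    (summable_inv_natCast_add_one_sq.mul_left (C / (1 - r))) isOpen_Iio isPreconnected_Iio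
    (fun n t ht => ?_) (fun n t ht => ?_) hzr (summable_log_one_sub_mul ha z) hzr
  · have hsub : ((n : ℝ) + 1) ^ 2 - t ≠ 0 :=
      (sub_pos.mpr ((lt_trans ht hr).trans_le (one_le_natCast_add_one_sq n))).ne'
    convert! (hasDerivAt_log_one_sub_div (by positivity) hsub).mul_const (a n) using 1
    ring
  · have : 0 < 1 - r := sub_pos.mpr hr
    have denominator : (1 - r) * ((n : ℝ) + 1) ^ 2 ≤ ((n : ℝ) + 1) ^ 2 - t := by
      nlinarith [one_le_natCast_add_one_sq n, mem_Iio.mp ht]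
    rw [norm_neg, norm_div, norm_eq_abs, norm_of_nonneg (le_trans (by positivity) denominator),
      ← div_eq_mul_inv, div_div]
    exact div_le_div₀ hC (ha n) (by positivity) denominator

/-- The part of the Green's function series that depends on the height `π * x`, up to the factor
`1 / (4 * π ^ 2)`. It comes from `sin ^ 2 t = (1 - cos (2 * t)) / 2`. -/
noncomputable def logCosSeries (x z : ℝ) : ℝ :=
  ∑' n : ℕ, log (1 - z / ((n : ℝ) + 1) ^ 2) * cos (2 * π * (n + 1) * x)

lemma logCosSeries_zero (x : ℝ) : logCosSeries x 0 = 0 := by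
  simp [logCosSeries]

lemma hasDerivAt_logCosSeries (x : ℝ) (hz : z < 1) : HasDerivAt (logCosSeries x)
    (-∑' n : ℕ, cos (2 * π * (n + 1) * x) / (((n : ℝ) + 1) ^ 2 - z)) z :=
  hasDerivAt_tsum_log_one_sub_mul (fun _ => abs_cos_le_one _) hz

lemma continuousOn_logCosSeries (x : ℝ) : ContinuousOn (logCosSeries x) (Iio 1) :=
  fun _ hz => (hasDerivAt_logCosSeries x hz).continuousAt.continuousWithinAt

lemma hasDerivAt_sq_div_two_pi (l : ℝ) :
    HasDerivAt (fun l => (l / (2 * π)) ^ 2) (l / (2 * π ^ 2)) l := by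
  convert! ((hasDerivAt_id l).div_const (2 * π)).pow 2 using 1
  norm_num
  field_simp

lemma hasDerivAt_logCosSeries_neg_sq (hx : x ∈ Ico 0 1) (hl : l ≠ 0) :
    HasDerivAt (fun l => logCosSeries x (-(l / (2 * π)) ^ 2))
      (cosh (l * (1 / 2 - x)) / (2 * sinh (l / 2)) - 1 / l) l := by
  have hz : -(l / (2 * π)) ^ 2 < 1 := (neg_nonpos.mpr (sq_nonneg _)).trans_lt one_pos
  have h := (hasDerivAt_logCosSeries x hz).comp l (hasDerivAt_sq_div_two_pi l).neg
  simp_rw [sub_neg_eq_add] at h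
  rw [(hasSum_cos_div_sq_add_sq hl hx).tsum_eq] at h
  convert! h using 1
  field_simp

lemma div_two_pi_sq_lt_one (hl : l ∈ Ico 0 (2 * π)) : (l / (2 * π)) ^ 2 < 1 :=
  pow_lt_one₀ (div_nonneg hl.1 two_pi_pos.le) ((div_lt_one two_pi_pos).mpr hl.2) two_ne_zero

lemma hasDerivAt_logCosSeries_sq (hx : x ∈ Ico 0 1) (hl : l ∈ Ioo 0 (2 * π)) :
    HasDerivAt (fun l => logCosSeries x ((l / (2 * π)) ^ 2))
      (cos (l * (1 / 2 - x)) / (2 * sin (l / 2)) - 1 / l) l := by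
  have hl₀ : l ≠ 0 := hl.1.ne'
  have hsin : sin (l / 2) ≠ 0 :=
    (sin_pos_of_pos_of_lt_pi (half_pos hl.1) ((div_lt_iff₀' two_pos).mpr hl.2)).ne'
  have h := (hasDerivAt_logCosSeries x (div_two_pi_sq_lt_one (Ioo_subset_Ico_self hl))).comp l
    (hasDerivAt_sq_div_two_pi l)
  rw [(hasSum_cos_div_sq_sub_sq hsin hx).tsum_eq] at h
  convert! h using 1
  field_simp
  ring

end LogCosSeries

section LayerKernel

open MeasureTheory Set

variable {x y : ℝ}

/-- The part of the digamma function that is symmetric under `x ↦ 1 - x`. -/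
noncomputable def symmDigamma (x : ℝ) : ℝ := (digamma x + digamma (1 - x)) / 2

lemma symmDigamma_eq_add_cot (hx : x ∈ Ioo 0 1) :
    symmDigamma x = digamma x + π / 2 * cot (π * x) := by
  rw [symmDigamma, digamma_one_sub hx]
  ring

/-- The `l`-density of `symmDigamma x - symmDigamma y`; minus it is also the `l`-derivative of
`logCosSeries x - logCosSeries y` at `-(l / (2 * π)) ^ 2`. -/
noncomputable def layerKernel (x y l : ℝ) : ℝ :=
  (cosh (l * (1 / 2 - y)) - cosh (l * (1 / 2 - x))) / (2 * sinh (l / 2))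

lemma layerKernel_eq_exp (x y l : ℝ) : layerKernel x y l =
    ((exp (-y * l) - exp (-x * l)) / (1 - exp (-l))
      + (exp (-(1 - y) * l) - exp (-(1 - x) * l)) / (1 - exp (-l))) / 2 := by
  have hcosh (t : ℝ) : 2 * cosh (l * (1 / 2 - t)) * exp (-(l / 2))
      = exp (-t * l) + exp (-(1 - t) * l) := by
    rw [cosh_eq, mul_div_cancel₀ _ two_ne_zero, add_mul, ← exp_add, ← exp_add]
    ring_nf
  have hsinh : 2 * sinh (l / 2) * exp (-(l / 2)) = 1 - exp (-l) := by
    rw [sinh_eq, mul_div_cancel₀ _ two_ne_zero, sub_mul, ← exp_add, ← exp_add,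
      add_neg_cancel, exp_zero]
    ring_nf
  rw [layerKernel, ← mul_div_mul_right _ _ (exp_ne_zero (-(l / 2))), hsinh, ← add_div,
    div_right_comm]
  congr 1
  linear_combination (hcosh y - hcosh x) / 2

lemma integrableOn_layerKernel (hx : x ∈ Ioo 0 1) (hy : y ∈ Ioo 0 1) :
    IntegrableOn (layerKernel x y) (Ioi 0) := by
  simp_rw [funext (layerKernel_eq_exp x y)]
  exact ((integrableOn_digamma_sub_digamma hx.1 hy.1).add
    (integrableOn_digamma_sub_digamma (sub_pos.mpr hx.2) (sub_pos.mpr hy.2))).div_const 2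

lemma symmDigamma_sub_symmDigamma_eq_integral (hx : x ∈ Ioo 0 1) (hy : y ∈ Ioo 0 1) :
    symmDigamma x - symmDigamma y = ∫ l in Ioi 0, layerKernel x y l := by
  have hx' := sub_pos.mpr hx.2
  have hy' := sub_pos.mpr hy.2
  simp_rw [layerKernel_eq_exp]
  rw [integral_div, integral_add (integrableOn_digamma_sub_digamma hx.1 hy.1)
    (integrableOn_digamma_sub_digamma hx' hy'), ← digamma_sub_digamma_eq_integral hx.1 hy.1,
    ← digamma_sub_digamma_eq_integral hx' hy', symmDigamma, symmDigamma]
  ring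

lemma layerKernel_pos (h : |x - 1 / 2| < |y - 1 / 2|) {l : ℝ} (hl : 0 < l) :
    0 < layerKernel x y l := by
  refine div_pos (sub_pos.mpr (cosh_lt_cosh.mpr ?_))
    (mul_pos two_pos (sinh_pos_iff.mpr (by positivity)))
  rw [abs_mul, abs_mul, abs_sub_comm, abs_sub_comm _ y]
  exact mul_lt_mul_of_pos_left h (abs_pos.mpr hl.ne')

lemma integral_layerKernel_Ioi_pos (hx : x ∈ Ioo 0 1) (hy : y ∈ Ioo 0 1)
    (h : |x - 1 / 2| < |y - 1 / 2|) {L : ℝ} (hL : 0 ≤ L) : 0 < ∫ l in Ioi L, layerKernel x y l := by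
  have pos (l : ℝ) (hl : l ∈ Ioi L) : 0 < layerKernel x y l := layerKernel_pos h (hL.trans_lt hl)
  have support : Ioi L ⊆ Function.support (layerKernel x y) := fun l hl => (pos l hl).ne'
  rw [setIntegral_pos_iff_support_of_nonneg_ae
    ((ae_restrict_iff' measurableSet_Ioi).mpr (.of_forall fun l hl => (pos l hl).le))
    ((integrableOn_layerKernel hx hy).mono_set (Ioi_subset_Ioi hL)),
    inter_eq_right.mpr support]
  simp

lemma continuous_logCosSeries_neg_sq (x : ℝ) :
    Continuous fun l => logCosSeries x (-(l / (2 * π)) ^ 2) :=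
  (continuousOn_logCosSeries x).comp_continuous (by fun_prop)
    fun l => (neg_nonpos.mpr (sq_nonneg (l / (2 * π)))).trans_lt one_pos

lemma integral_layerKernel_eq (hx : x ∈ Ioo 0 1) (hy : y ∈ Ioo 0 1) {L : ℝ} (hL : 0 ≤ L) :
    ∫ l in 0..L, layerKernel x y l
      = logCosSeries y (-(L / (2 * π)) ^ 2) - logCosSeries x (-(L / (2 * π)) ^ 2) := by
  have hasDerivAt (l : ℝ) (hl : l ∈ Ioo 0 L) : HasDerivAt
      (fun l => logCosSeries y (-(l / (2 * π)) ^ 2) - logCosSeries x (-(l / (2 * π)) ^ 2))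
      (layerKernel x y l) l := by
    convert! (hasDerivAt_logCosSeries_neg_sq (Ioo_subset_Ico_self hy) hl.1.ne').sub
      (hasDerivAt_logCosSeries_neg_sq (Ioo_subset_Ico_self hx) hl.1.ne') using 1
    rw [sub_sub_sub_cancel_right, ← sub_div, layerKernel]
  have integrable : IntervalIntegrable (layerKernel x y) volume 0 L :=
    (intervalIntegrable_iff_integrableOn_Ioc_of_le hL).mpr
      ((integrableOn_layerKernel hx hy).mono_set Ioc_subset_Ioi_self)
  rw [intervalIntegral.integral_eq_sub_of_hasDerivAt_of_le hL
    ((continuous_logCosSeries_neg_sq y).sub (continuous_logCosSeries_neg_sq x)).continuousOn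
    hasDerivAt integrable]
  simp [logCosSeries_zero]

lemma logCosSeries_add_symmDigamma_lt_of_nonpos (hx : x ∈ Ioo 0 1) (hy : y ∈ Ioo 0 1)
    (h : |x - 1 / 2| < |y - 1 / 2|) {z : ℝ} (hz : z ≤ 0) :
    logCosSeries y z + symmDigamma y < logCosSeries x z + symmDigamma x := by
  obtain ⟨L, hL, rfl⟩ : ∃ L, 0 ≤ L ∧ -(L / (2 * π)) ^ 2 = z :=
    ⟨2 * π * √(-z), by positivity, by
      rw [mul_div_cancel_left₀ _ two_pi_pos.ne', sq_sqrt (neg_nonneg.mpr hz), neg_neg]⟩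
  have tail := intervalIntegral.integral_Ioi_sub_Ioi (integrableOn_layerKernel hx hy) hL
  rw [← symmDigamma_sub_symmDigamma_eq_integral hx hy, integral_layerKernel_eq hx hy hL] at tail
  linarith [integral_layerKernel_Ioi_pos hx hy h hL]

lemma cos_mul_half_sub_le (hy : |y - 1 / 2| ≤ 1 / 2) (h : |x - 1 / 2| ≤ |y - 1 / 2|) {l : ℝ}
    (hl : l ∈ Icc 0 (2 * π)) : cos (l * (1 / 2 - y)) ≤ cos (l * (1 / 2 - x)) := by
  rw [← cos_abs (l * (1 / 2 - y)), ← cos_abs (l * (1 / 2 - x)), abs_mul, abs_mul,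
    abs_sub_comm _ x, abs_sub_comm _ y]
  refine cos_le_cos_of_nonneg_of_le_pi (by positivity) ?_ (by gcongr)
  calc |l| * |y - 1 / 2| ≤ 2 * π * (1 / 2) := by
        rw [abs_of_nonneg hl.1]
        exact mul_le_mul hl.2 hy (abs_nonneg _) two_pi_pos.le
    _ = π := by ring

lemma monotoneOn_logCosSeries_sub (hx : x ∈ Ico 0 1) (hy : y ∈ Ico 0 1)
    (h : |x - 1 / 2| ≤ |y - 1 / 2|) :
    MonotoneOn (fun l => logCosSeries x ((l / (2 * π)) ^ 2) - logCosSeries y ((l / (2 * π)) ^ 2))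
      (Ico 0 (2 * π)) := by
  have continuousOn (t : ℝ) : ContinuousOn (fun l => logCosSeries t ((l / (2 * π)) ^ 2))
      (Ico 0 (2 * π)) :=
    (continuousOn_logCosSeries t).comp (by fun_prop) fun l hl => div_two_pi_sq_lt_one hl
  have hy_half : |y - 1 / 2| ≤ 1 / 2 :=
    abs_sub_le_iff.mpr ⟨by linarith [hy.2], by linarith [hy.1]⟩
  refine monotoneOn_of_hasDerivWithinAt_nonneg
    (f' := fun l => (cos (l * (1 / 2 - x)) - cos (l * (1 / 2 - y))) / (2 * sin (l / 2)))
    (convex_Ico 0 (2 * π)) ((continuousOn x).sub (continuousOn y)) ?_ ?_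
  all_goals rw [interior_Ico]
  · intro l hl
    convert! ((hasDerivAt_logCosSeries_sq hx hl).sub
      (hasDerivAt_logCosSeries_sq hy hl)).hasDerivWithinAt using 1
    rw [sub_sub_sub_cancel_right, sub_div]
  · intro l hl
    have hsin : 0 ≤ sin (l / 2) :=
      sin_nonneg_of_nonneg_of_le_pi (half_pos hl.1).le ((div_le_iff₀' two_pos).mpr hl.2.le)
    have hcos := cos_mul_half_sub_le hy_half h (Ioo_subset_Icc_self hl)
    exact div_nonneg (sub_nonneg.mpr hcos) (by positivity)

lemma logCosSeries_le_of_nonneg (hx : x ∈ Ico 0 1) (hy : y ∈ Ico 0 1)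
    (h : |x - 1 / 2| ≤ |y - 1 / 2|) {z : ℝ} (hz₀ : 0 ≤ z) (hz : z < 1) :
    logCosSeries y z ≤ logCosSeries x z := by
  obtain ⟨L, hL, rfl⟩ : ∃ L, L ∈ Ico 0 (2 * π) ∧ (L / (2 * π)) ^ 2 = z :=
    ⟨2 * π * √z, ⟨by positivity, mul_lt_of_lt_one_right two_pi_pos
      ((sqrt_lt' one_pos).mpr (by simpa using hz))⟩, by
      rw [mul_div_cancel_left₀ _ two_pi_pos.ne', sq_sqrt hz₀]⟩
  simpa [logCosSeries_zero] using
    monotoneOn_logCosSeries_sub hx hy h (left_mem_Ico.mpr two_pi_pos) hL hL.1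

lemma logCosSeries_add_symmDigamma_lt (hy : y ∈ Ioo 0 1) (h : |x - 1 / 2| < |y - 1 / 2|) {z : ℝ}
    (hz : z < 1) : logCosSeries y z + symmDigamma y < logCosSeries x z + symmDigamma x := by
  have hx : x ∈ Ioo 0 1 := by
    have hy_half : |y - 1 / 2| < 1 / 2 :=
      abs_sub_lt_iff.mpr ⟨by linarith [hy.2], by linarith [hy.1]⟩
    obtain ⟨hlt, hgt⟩ := abs_sub_lt_iff.mp (h.trans hy_half)
    constructor <;> linarith
  obtain hz₀ | hz₀ := le_total z 0
  · exact logCosSeries_add_symmDigamma_lt_of_nonpos hx hy h hz₀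
  · have at_zero := logCosSeries_add_symmDigamma_lt_of_nonpos hx hy h le_rfl
    rw [logCosSeries_zero, logCosSeries_zero, zero_add, zero_add] at at_zero
    exact add_lt_add_of_le_of_lt (logCosSeries_le_of_nonneg (Ioo_subset_Ico_self hx)
      (Ioo_subset_Ico_self hy) h.le hz₀ hz) at_zero

end LayerKernel

section XiLayer

open Set

variable {b b' z z' : ℝ}

lemma log_sqrt_mul_sin_sq (hz : z < 1) (b : ℝ) (n : ℕ) :
    log √(1 - z / ((n : ℝ) + 1) ^ 2) * sin ((n + 1) * b) ^ 2
      = (log (1 - z / ((n : ℝ) + 1) ^ 2) * 1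
        - log (1 - z / ((n : ℝ) + 1) ^ 2) * cos (2 * π * (n + 1) * (b / π))) / 4 := by
  rw [log_sqrt (one_sub_div_natCast_add_one_sq_pos hz n).le, sin_sq_eq_half_sub,
    show 2 * π * (n + 1) * (b / π) = 2 * ((n + 1) * b) by field_simp]
  ring

lemma xiLayer_eq_logCosSeries (hb : b ∈ Ioo 0 π) (hz : z < 1) :
    xiLayer b z = 1 / (4 * π ^ 2) * (logCosSeries (b / π) z + symmDigamma (b / π)
      + (eulerMascheroniConstant - ∑' n : ℕ, log (1 - z / ((n : ℝ) + 1) ^ 2))) := by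
  have hx : b / π ∈ Ioo 0 1 := ⟨div_pos hb.1 pi_pos, (div_lt_one pi_pos).mpr hb.2⟩
  have logs := summable_log_one_sub_mul (a := fun _ => 1) (C := 1) (by simp) z
  have cosines := summable_log_one_sub_mul (a := fun n => cos (2 * π * (n + 1) * (b / π)))
    (fun _ => abs_cos_le_one _) z
  rw [xiLayer, symmDigamma_eq_add_cot hx, mul_div_cancel₀ _ pi_ne_zero]
  simp_rw [log_sqrt_mul_sin_sq hz]
  rw [tsum_div_const, logs.tsum_sub cosines, ← logCosSeries]
  simp only [mul_one]
  ring

lemma xiLayer_lt_xiLayer (hb' : b' ∈ Ioo 0 π) (h : |b - π / 2| < |b' - π / 2|) (hz : z < 1) :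
    xiLayer b' z < xiLayer b z := by
  have hb : b ∈ Ioo 0 π := by
    have hb'_half : |b' - π / 2| < π / 2 :=
      abs_sub_lt_iff.mpr ⟨by linarith [hb'.2], by linarith [hb'.1]⟩
    obtain ⟨hlt, hgt⟩ := abs_sub_lt_iff.mp (h.trans hb'_half)
    constructor <;> linarith
  have rescale (t : ℝ) : |t / π - 1 / 2| = |t - π / 2| / π := by
    rw [show t / π - 1 / 2 = (t - π / 2) / π by field_simp, abs_div, abs_of_pos pi_pos]
  have h_unit : |b / π - 1 / 2| < |b' / π - 1 / 2| := by
    rw [rescale, rescale]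
    exact div_lt_div_of_pos_right h pi_pos
  have hy : b' / π ∈ Ioo 0 1 := ⟨div_pos hb'.1 pi_pos, (div_lt_one pi_pos).mpr hb'.2⟩
  rw [xiLayer_eq_logCosSeries hb hz, xiLayer_eq_logCosSeries hb' hz]
  have := logCosSeries_add_symmDigamma_lt hy h_unit hz
  gcongr ?_ * (?_ + _)

lemma summable_log_sqrt_mul_sin_sq (hz : z < 1) (b : ℝ) : Summable fun n : ℕ =>
    log √(1 - z / ((n : ℝ) + 1) ^ 2) * sin ((n + 1) * b) ^ 2 := by
  simp_rw [log_sqrt_mul_sin_sq hz b]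
  exact ((summable_log_one_sub_mul (a := fun _ => 1) (C := 1) (by simp) z).sub
    (summable_log_one_sub_mul (fun _ => abs_cos_le_one _) z)).div_const 4

lemma monotoneOn_xiLayer (b : ℝ) : MonotoneOn (xiLayer b) (Iio 1) := by
  intro z (hz : z < 1) z' (hz' : z' < 1) hzz'
  have termwise (n : ℕ) : log √(1 - z' / ((n : ℝ) + 1) ^ 2) * sin ((n + 1) * b) ^ 2
      ≤ log √(1 - z / ((n : ℝ) + 1) ^ 2) * sin ((n + 1) * b) ^ 2 := by
    have := sqrt_pos.mpr (one_sub_div_natCast_add_one_sq_pos hz' n)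
    gcongr
  have sums := (summable_log_sqrt_mul_sin_sq hz' b).tsum_le_tsum termwise
    (summable_log_sqrt_mul_sin_sq hz b)
  rw [xiLayer, xiLayer, neg_mul, neg_mul]
  gcongr

theorem eigenvalue_monotone_halflayer_general (hb' : b' ∈ Ioo 0 π)
    (h : |b - π / 2| < |b' - π / 2|) (hz : z < 1) (hz' : z' < 1)
    (heq : xiLayer b z = xiLayer b' z') : z < z' := by
  have : xiLayer b z < xiLayer b z' := heq ▸ xiLayer_lt_xiLayer hb' h hz'
  exact (monotoneOn_xiLayer b).reflect_lt hz hz' this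

end XiLayer

/-- Strict monotonicity of the bound-state energy across the halflayer: for
`0 < b' < b ≤ π/2` and `α ∈ ℝ`, if `z` and `z'` are the bound-state energies,
i.e. `z, z' < 1` with `ξ(b,z) = α` and `ξ(b',z') = α`, then `z < z'`. -/
theorem eigenvalue_monotone_halflayer (b b' α z z' : ℝ) (hb'0 : 0 < b') (hb'b : b' < b)
    (hb : b ≤ π / 2) (hz : z < 1) (hz' : z' < 1)
    (heq : xiLayer b z = α) (heq' : xiLayer b' z' = α) :
    z < z' := by
  refine eigenvalue_monotone_halflayer_general ⟨hb'0, by linarith⟩ ?_ hz hz' (heq.trans heq'.symm)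
  rw [abs_of_nonpos (by linarith), abs_of_neg (by linarith)]
  linarith
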